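/- arXiv:1210.0915 — 7 statements merged into one kernel-verified Lean document; each statement's English description precedes it below -/
import Mathlib

section
/- Fix a complex number w with |w| < 1. For each real q with 0 < q < 1, the infinite products (q⁴w;q⁴)_∞ := ∏_{n=0}^∞ (1 − q^{4n+4} w) and (q²w;q⁴)_∞ := ∏_{n=0}^∞ (1 − q^{4n+2} w) converge to nonzero complex numbers, and the limit as q tends to 1 from below (over real q ∈ (0,1)) of ( (q⁴w;q⁴)_∞ / (q²w;q⁴)_∞ )^{−2} equals 1 − w. -/
open Filter Topology

/-!
Write `A`, `B` for the products over `1 - q^(4n+4) w` and `1 - q^(4n+2) w`, and let `C` be the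
product over `1 - q^(4n+6) w`, so that `B = (1 - q² w) C`. Then
`(A / B)^(-2) = (1 - q² w) · (B C / A²)`, and since
`(1 - q^(4n+2) w)(1 - q^(4n+6) w) - (1 - q^(4n+4) w)² = -q^(4n+2) (1 - q²)² w`,
the quotient `B C / A²` is a product `∏ (1 + aₙ)` with
`∑ ‖aₙ‖ ≤ (1 - q²)² / ((1 - q⁴) (1 - ‖w‖)²) ≤ (1 - q²) / (1 - ‖w‖)²`.
This bound tends to `0` as `q → 1`, hence the product tends to `1`.
-/

/-- The relative error of the `n`-th factor: `1 + ratioErr w q n` equals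
`(1 - q^(4n+2) w)(1 - q^(4n+6) w) / (1 - q^(4n+4) w)²`. -/
noncomputable def ratioErr (w : ℂ) (q : ℝ) (n : ℕ) : ℂ :=
  -((q : ℂ) ^ (4 * n + 2) * (1 - (q : ℂ) ^ 2) ^ 2 * w) / (1 - (q : ℂ) ^ (4 * n + 4) * w) ^ 2

lemma norm_qpow_mul_le (w : ℂ) {q : ℝ} (h0 : 0 < q) (h1 : q < 1) (m : ℕ) :
    ‖(q : ℂ) ^ m * w‖ ≤ ‖w‖ := by
  rw [norm_mul, norm_pow, Complex.norm_real, Real.norm_of_nonneg h0.le]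
  exact mul_le_of_le_one_left (norm_nonneg _) (pow_le_one₀ h0.le h1.le)

lemma one_sub_norm_le (w : ℂ) {q : ℝ} (h0 : 0 < q) (h1 : q < 1) (m : ℕ) :
    1 - ‖w‖ ≤ ‖1 - (q : ℂ) ^ m * w‖ := by
  have h := norm_sub_norm_le (1 : ℂ) ((q : ℂ) ^ m * w)
  rw [norm_one] at h
  linarith [norm_qpow_mul_le w h0 h1 m]

lemma one_sub_qpow_ne_zero {w : ℂ} (hw : ‖w‖ < 1) {q : ℝ} (h0 : 0 < q) (h1 : q < 1) (m : ℕ) :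
    1 - (q : ℂ) ^ m * w ≠ 0 := by
  rw [← norm_pos_iff]
  linarith [one_sub_norm_le w h0 h1 m]

lemma hasSum_qpow_four {q : ℝ} (h0 : 0 < q) (h1 : q < 1) :
    HasSum (fun n : ℕ => q ^ (4 * n)) (1 - q ^ 4)⁻¹ := by
  simp_rw [pow_mul]
  exact hasSum_geometric_of_lt_one (by positivity) (pow_lt_one₀ h0.le h1 (by norm_num))

lemma summable_norm_qpow (w : ℂ) {q : ℝ} (h0 : 0 < q) (h1 : q < 1) (k : ℕ) :
    Summable (fun n : ℕ => ‖-((q : ℂ) ^ (4 * n + k) * w)‖) := by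
  have h := (hasSum_qpow_four h0 h1).summable.mul_right (q ^ k * ‖w‖)
  refine h.congr fun n => ?_
  rw [norm_neg, norm_mul, norm_pow, Complex.norm_real, Real.norm_of_nonneg h0.le, pow_add]
  ring

lemma multipliable_qpow (w : ℂ) {q : ℝ} (h0 : 0 < q) (h1 : q < 1) (k : ℕ) :
    Multipliable (fun n : ℕ => 1 - (q : ℂ) ^ (4 * n + k) * w) := by
  simpa only [← sub_eq_add_neg] using
    multipliable_one_add_of_summable (summable_norm_qpow w h0 h1 k)

lemma tprod_qpow_ne_zero {w : ℂ} (hw : ‖w‖ < 1) {q : ℝ} (h0 : 0 < q) (h1 : q < 1) (k : ℕ) :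
    (∏' n : ℕ, (1 - (q : ℂ) ^ (4 * n + k) * w)) ≠ 0 := by
  have h := tprod_one_add_ne_zero_of_summable (f := fun n : ℕ => -((q : ℂ) ^ (4 * n + k) * w))
    (fun n => by simpa only [← sub_eq_add_neg] using one_sub_qpow_ne_zero hw h0 h1 _)
    (summable_norm_qpow w h0 h1 k)
  simpa only [← sub_eq_add_neg] using h

lemma norm_ratioErr_le {w : ℂ} (hw : ‖w‖ < 1) {q : ℝ} (h0 : 0 < q) (h1 : q < 1) (n : ℕ) :
    ‖ratioErr w q n‖ ≤ q ^ (4 * n) * ((1 - q ^ 2) ^ 2 / (1 - ‖w‖) ^ 2) := by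
  have hq2 : q ^ 2 < 1 := pow_lt_one₀ h0.le h1 (by norm_num)
  have hnum : ‖(1 : ℂ) - (q : ℂ) ^ 2‖ = 1 - q ^ 2 := by
    rw [show (1 : ℂ) - (q : ℂ) ^ 2 = ((1 - q ^ 2 : ℝ) : ℂ) by push_cast; ring,
      Complex.norm_real, Real.norm_of_nonneg (by linarith)]
  have hd := one_sub_norm_le w h0 h1 (4 * n + 4)
  have hw' : 0 < 1 - ‖w‖ := by linarith
  rw [ratioErr, norm_div, norm_neg, norm_mul, norm_mul, norm_pow, norm_pow, norm_pow, hnum,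
    Complex.norm_real, Real.norm_of_nonneg h0.le, ← mul_div_assoc]
  have hp : q ^ (4 * n + 2) ≤ q ^ (4 * n) := pow_le_pow_of_le_one h0.le h1.le (by omega)
  refine div_le_div₀ (by positivity) ?_ (by positivity) (by gcongr)
  calc q ^ (4 * n + 2) * (1 - q ^ 2) ^ 2 * ‖w‖
      ≤ q ^ (4 * n + 2) * (1 - q ^ 2) ^ 2 := mul_le_of_le_one_right (by positivity) hw.le
    _ ≤ q ^ (4 * n) * (1 - q ^ 2) ^ 2 := by gcongr

lemma summable_norm_ratioErr {w : ℂ} (hw : ‖w‖ < 1) {q : ℝ} (h0 : 0 < q) (h1 : q < 1) :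
    Summable (fun n => ‖ratioErr w q n‖) :=
  Summable.of_nonneg_of_le (fun _ => norm_nonneg _) (norm_ratioErr_le hw h0 h1)
    ((hasSum_qpow_four h0 h1).summable.mul_right _)

lemma tsum_norm_ratioErr_le {w : ℂ} (hw : ‖w‖ < 1) {q : ℝ} (h0 : 0 < q) (h1 : q < 1) :
    ∑' n, ‖ratioErr w q n‖ ≤ (1 - q ^ 2) / (1 - ‖w‖) ^ 2 := by
  have hq2 : q ^ 2 < 1 := pow_lt_one₀ h0.le h1 (by norm_num)
  have hq4 : 0 < 1 - q ^ 4 := by nlinarith [sq_nonneg q]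
  have hs := (hasSum_qpow_four h0 h1).mul_right ((1 - q ^ 2) ^ 2 / (1 - ‖w‖) ^ 2)
  refine ((summable_norm_ratioErr hw h0 h1).tsum_le_tsum (norm_ratioErr_le hw h0 h1)
    hs.summable).trans ?_
  rw [hs.tsum_eq, ← mul_div_assoc]
  gcongr
  rw [inv_mul_le_iff₀ hq4]
  nlinarith [mul_nonneg (sq_nonneg q) (sq_nonneg (1 - q ^ 2))]

/-- The exact factorisation `(A / B)^(-2) = (1 - q² w) ∏ (1 + aₙ)`. -/
lemma ratio_zpow_eq {w : ℂ} (hw : ‖w‖ < 1) {q : ℝ} (h0 : 0 < q) (h1 : q < 1) :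
    ((∏' n : ℕ, (1 - (q : ℂ) ^ (4 * n + 4) * w)) /
        (∏' n : ℕ, (1 - (q : ℂ) ^ (4 * n + 2) * w))) ^ (-2 : ℤ)
      = (1 - (q : ℂ) ^ 2 * w) * ∏' n, (1 + ratioErr w q n) := by
  have hA := multipliable_qpow w h0 h1 4
  have hB := multipliable_qpow w h0 h1 2
  have hC := multipliable_qpow w h0 h1 6
  have hP := multipliable_one_add_of_summable (summable_norm_ratioErr hw h0 h1)
  have hA0 := tprod_qpow_ne_zero hw h0 h1 4
  have hBC : (∏' n : ℕ, (1 - (q : ℂ) ^ (4 * n + 2) * w))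
      = (1 - (q : ℂ) ^ 2 * w) * ∏' n : ℕ, (1 - (q : ℂ) ^ (4 * n + 6) * w) := by
    rw [tprod_eq_zero_mul' (f := fun n : ℕ => 1 - (q : ℂ) ^ (4 * n + 2) * w)]
    · simp only [mul_add, mul_zero, zero_add, mul_one, add_assoc, Nat.reduceAdd]
    · simpa only [mul_add, mul_one, add_assoc, Nat.reduceAdd] using hC
  have hkey : (∏' n, (1 + ratioErr w q n)) * ((∏' n : ℕ, (1 - (q : ℂ) ^ (4 * n + 4) * w)) *
        (∏' n : ℕ, (1 - (q : ℂ) ^ (4 * n + 4) * w)))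
      = (∏' n : ℕ, (1 - (q : ℂ) ^ (4 * n + 2) * w)) *
        ∏' n : ℕ, (1 - (q : ℂ) ^ (4 * n + 6) * w) := by
    rw [← hA.tprod_mul hA, ← hP.tprod_mul (hA.mul hA), ← hB.tprod_mul hC]
    refine tprod_congr fun n => ?_
    have hn := one_sub_qpow_ne_zero hw h0 h1 (4 * n + 4)
    rw [ratioErr, ← pow_two, add_mul, div_mul_cancel₀ _ (pow_ne_zero 2 hn)]
    ring
  rw [zpow_neg, ← inv_zpow, inv_div, zpow_ofNat, div_pow, div_eq_iff (pow_ne_zero 2 hA0)]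
  linear_combination (∏' n : ℕ, (1 - (q : ℂ) ^ (4 * n + 2) * w)) * hBC
    - (1 - (q : ℂ) ^ 2 * w) * hkey

lemma tendsto_tprod_ratioErr {w : ℂ} (hw : ‖w‖ < 1) :
    Tendsto (fun q : ℝ => ∏' n, (1 + ratioErr w q n)) (𝓝[Set.Ioo (0 : ℝ) 1] 1) (𝓝 1) := by
  rw [tendsto_iff_norm_sub_tendsto_zero]
  have hlim : Tendsto (fun q : ℝ => Real.exp ((1 - q ^ 2) / (1 - ‖w‖) ^ 2) - 1)
      (𝓝[Set.Ioo (0 : ℝ) 1] 1) (𝓝 0) := by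
    have hc : Continuous (fun q : ℝ => Real.exp ((1 - q ^ 2) / (1 - ‖w‖) ^ 2) - 1) := by fun_prop
    have h := (hc.tendsto 1).mono_left (nhdsWithin_le_nhds (s := Set.Ioo (0 : ℝ) 1))
    simpa using h
  refine squeeze_zero' (Eventually.of_forall fun _ => norm_nonneg _) ?_ hlim
  filter_upwards [self_mem_nhdsWithin] with q hq
  have hs := summable_norm_ratioErr hw hq.1 hq.2
  -- The finite partial products satisfy the bound, which then passes to the limit.
  refine le_of_tendsto ((multipliable_one_add_of_summable hs).hasProd.sub_const 1).norm
    (Eventually.of_forall fun t => (t.norm_prod_one_add_sub_one_le _).trans ?_)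
  gcongr
  refine (hs.sum_le_tsum t fun _ _ => norm_nonneg _).trans ?_
  exact tsum_norm_ratioErr_le hw hq.1 hq.2

/-- For fixed `w : ℂ` with `|w| < 1`, and each real `0 < q < 1`, the infinite
products `(q⁴w;q⁴)_∞ = ∏ (1 - q^{4n+4} w)` and `(q²w;q⁴)_∞ = ∏ (1 - q^{4n+2} w)` converge to
nonzero complex numbers, and the limit of `((q⁴w;q⁴)_∞ / (q²w;q⁴)_∞)^{-2}` as `q → 1⁻`
(over `q ∈ (0,1)`) is `1 - w`. -/
theorem qpochhammer_ratio_limit (w : ℂ) (hw : ‖w‖ < 1) :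
    (∀ q : ℝ, 0 < q → q < 1 →
      Multipliable (fun n : ℕ => 1 - (q : ℂ) ^ (4 * n + 4) * w) ∧
      (∏' n : ℕ, (1 - (q : ℂ) ^ (4 * n + 4) * w)) ≠ 0 ∧
      Multipliable (fun n : ℕ => 1 - (q : ℂ) ^ (4 * n + 2) * w) ∧
      (∏' n : ℕ, (1 - (q : ℂ) ^ (4 * n + 2) * w)) ≠ 0) ∧
    Tendsto
      (fun q : ℝ =>
        ((∏' n : ℕ, (1 - (q : ℂ) ^ (4 * n + 4) * w)) /
            (∏' n : ℕ, (1 - (q : ℂ) ^ (4 * n + 2) * w))) ^ (-2 : ℤ))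
      (𝓝[Set.Ioo (0 : ℝ) 1] 1) (𝓝 (1 - w)) := by
  refine ⟨fun q h0 h1 => ⟨multipliable_qpow w h0 h1 4, tprod_qpow_ne_zero hw h0 h1 4,
    multipliable_qpow w h0 h1 2, tprod_qpow_ne_zero hw h0 h1 2⟩, ?_⟩
  have hc : Continuous (fun q : ℝ => 1 - (q : ℂ) ^ 2 * w) := by fun_prop
  have h := ((hc.tendsto 1).mono_left (nhdsWithin_le_nhds (s := Set.Ioo (0 : ℝ) 1))).mul
    (tendsto_tprod_ratioErr hw)
  simp only [Complex.ofReal_one, one_pow, one_mul, mul_one] at h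
  refine h.congr' ?_
  filter_upwards [self_mem_nhdsWithin] with q hq
  exact (ratio_zpow_eq hw hq.1 hq.2).symm
end

section
/- Assume a_0 a_1^{−1} a_2² G + 1 is nonzero (hence invertible). Then the element F' := F · (a_0 a_1^{−1} G + a_2²) · (a_0 a_1^{−1} a_2² G + 1)^{−1} satisfies F' G = q² G F'. In other words, the substitution s_2 : F ↦ F'(with G unchanged) preserves the q-commutation relation F G = q² G F. -/
/-- in a division ring `D` with `q, a_0, …, a_5` invertible central elements
and invertible `F, G` satisfying `F G = q² G F`, if `a_0 a_1⁻¹ a_2² G + 1 ≠ 0` then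
`F' = F (a_0 a_1⁻¹ G + a_2²)(a_0 a_1⁻¹ a_2² G + 1)⁻¹` satisfies `F' G = q² G F'`. -/
theorem s2_preserves_q_commutation {D : Type*} [DivisionRing D]
    (q : D) (a : Fin 6 → D) (F G : D)
    (hq : q ≠ 0) (hqc : q ∈ Subring.center D)
    (ha : ∀ i, a i ≠ 0) (hac : ∀ i, a i ∈ Subring.center D)
    (hF : F ≠ 0) (hG : G ≠ 0)
    (hFG : F * G = q ^ 2 * G * F)
    (hden : a 0 * (a 1)⁻¹ * (a 2) ^ 2 * G + 1 ≠ 0) :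
    (F * (a 0 * (a 1)⁻¹ * G + (a 2) ^ 2) * (a 0 * (a 1)⁻¹ * (a 2) ^ 2 * G + 1)⁻¹) * G =
      q ^ 2 * G * (F * (a 0 * (a 1)⁻¹ * G + (a 2) ^ 2) *
        (a 0 * (a 1)⁻¹ * (a 2) ^ 2 * G + 1)⁻¹) := by
  have hc : ∀ i, Commute (a i) G := fun i => (Subring.mem_center_iff.mp (hac i) G).symm
  have h01 : Commute (a 0 * (a 1)⁻¹) G := (hc 0).mul_left (hc 1).inv_left₀
  have h2 : Commute ((a 2) ^ 2) G := (hc 2).pow_left 2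
  have hnum : Commute (a 0 * (a 1)⁻¹ * G + (a 2) ^ 2) G :=
    (h01.mul_left (Commute.refl G)).add_left h2
  have hinv : Commute (a 0 * (a 1)⁻¹ * (a 2) ^ 2 * G + 1)⁻¹ G :=
    (((h01.mul_left h2).mul_left (Commute.refl G)).add_left (Commute.one_left G)).inv_left₀
  -- The factor to the right of `F` commutes with `G`, so `G` moves past it to meet `F`.
  rw [mul_assoc F, mul_assoc F, (hnum.mul_left hinv).eq, ← mul_assoc F, hFG, mul_assoc _ F]
end

section
/- Assume a_4 a_5^{−1} F + a_3² is nonzero (hence invertible). Then the element G' := (a_3² a_4 a_5^{−1} F + 1) · (a_4 a_5^{−1} F + a_3²)^{−1} · G satisfies F G' = q² G' F. In other words, the substitution s_3 : G ↦ G' (with F unchanged) preserves the q-commutation relation F G = q² G F. -/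
/-!
The multiplier `R` in `G' = R * G` is a rational expression in `F` with central coefficients, so it
commutes with `F`. Hence `F R G = R F G = R q² G F = q² (R G) F`, as `q` is central.
-/

/-- in a division ring `D` with `q, a_0, …, a_5` invertible central elements
and invertible `F, G` satisfying `F G = q² G F`, if `a_4 a_5⁻¹ F + a_3² ≠ 0` then
`G' = (a_3² a_4 a_5⁻¹ F + 1)(a_4 a_5⁻¹ F + a_3²)⁻¹ G` satisfies `F G' = q² G' F`. -/
theorem s3_preserves_q_commutation {D : Type*} [DivisionRing D]
    (q : D) (a : Fin 6 → D) (F G : D)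
    (hq : q ≠ 0) (hqc : q ∈ Subring.center D)
    (ha : ∀ i, a i ≠ 0) (hac : ∀ i, a i ∈ Subring.center D)
    (hF : F ≠ 0) (hG : G ≠ 0)
    (hFG : F * G = q ^ 2 * G * F)
    (hden : a 4 * (a 5)⁻¹ * F + (a 3) ^ 2 ≠ 0) :
    F * (((a 3) ^ 2 * a 4 * (a 5)⁻¹ * F + 1) * (a 4 * (a 5)⁻¹ * F + (a 3) ^ 2)⁻¹ * G) =
      q ^ 2 * (((a 3) ^ 2 * a 4 * (a 5)⁻¹ * F + 1) *
        (a 4 * (a 5)⁻¹ * F + (a 3) ^ 2)⁻¹ * G) * F := by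
  have hc : ∀ i, Commute F (a i) := fun i => Subring.mem_center_iff.mp (hac i) F
  have hq2 : ∀ x : D, Commute x (q ^ 2) := fun x =>
    Commute.pow_right (Subring.mem_center_iff.mp hqc x) 2
  -- `F` commutes with the multiplier of `G`, which is a rational expression in `F` over the center.
  have hR : Commute F (((a 3) ^ 2 * a 4 * (a 5)⁻¹ * F + 1) *
      (a 4 * (a 5)⁻¹ * F + (a 3) ^ 2)⁻¹) := by
    have h3 := (hc 3).pow_right 2
    have h5 := (hc 5).inv_right₀
    exact (((((h3.mul_right (hc 4)).mul_right h5).mul_right (Commute.refl F)).add_right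
      (Commute.one_right F))).mul_right
      (((((hc 4).mul_right h5).mul_right (Commute.refl F)).add_right h3).inv_right₀)
  generalize ((a 3) ^ 2 * a 4 * (a 5)⁻¹ * F + 1) *
      (a 4 * (a 5)⁻¹ * F + (a 3) ^ 2)⁻¹ = R at hR ⊢
  calc F * (R * G) = R * (F * G) := by rw [← mul_assoc, hR.eq, mul_assoc]
    _ = R * q ^ 2 * G * F := by rw [hFG]; simp only [mul_assoc]
    _ = q ^ 2 * (R * G) * F := by rw [(hq2 R).eq]; simp only [mul_assoc]
end

section
/- Set b := a_0 a_1^{−1}, and assume that b a_2² G + 1 and b a_2^{−2} G + 1 are nonzero (hence invertible). Then F · (b G + a_2²) · (b a_2² G + 1)^{−1} · (b G + a_2^{−2}) · (b a_2^{−2} G + 1)^{−1} = F. Consequently, the substitution s_2 (which sends F ↦ F·(a_0a_1^{−1}G+a_2²)(a_0a_1^{−1}a_2²G+1)^{−1}, fixes G, and transforms the parameters by a_0 ↦ a_2a_0, a_1 ↦ a_2a_1, a_2 ↦ a_2^{−1}, a_3 ↦ a_2a_3) is an involution: applying it twice returns F. -/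
/-!
Write `b = a₀ a₁⁻¹` and `c = a₂²`. Since `c` is central and invertible,
`b G + c = c (b c⁻¹ G + 1)` and `b G + c⁻¹ = c⁻¹ (b c G + 1)`: each numerator is a central
multiple of the other factor's denominator. Moving the central factors together, the product
telescopes to `F c c⁻¹ = F`.
-/

/-- with `b = a_0 a_1⁻¹`, if `b a_2² G + 1 ≠ 0` and `b a_2⁻² G + 1 ≠ 0`, then
`F (bG + a_2²)(b a_2² G + 1)⁻¹ (bG + a_2⁻²)(b a_2⁻² G + 1)⁻¹ = F`; i.e. the substitution
`s_2` is an involution on `F`. -/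
theorem s2_involution {D : Type*} [DivisionRing D]
    (q : D) (a : Fin 6 → D) (F G : D)
    (hq : q ≠ 0) (hqc : q ∈ Subring.center D)
    (ha : ∀ i, a i ≠ 0) (hac : ∀ i, a i ∈ Subring.center D)
    (hF : F ≠ 0) (hG : G ≠ 0)
    (hFG : F * G = q ^ 2 * G * F)
    (hden1 : a 0 * (a 1)⁻¹ * (a 2) ^ 2 * G + 1 ≠ 0)
    (hden2 : a 0 * (a 1)⁻¹ * (a 2) ^ (-2 : ℤ) * G + 1 ≠ 0) :
    F * (a 0 * (a 1)⁻¹ * G + (a 2) ^ 2) * (a 0 * (a 1)⁻¹ * (a 2) ^ 2 * G + 1)⁻¹ *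
        (a 0 * (a 1)⁻¹ * G + (a 2) ^ (-2 : ℤ)) *
        (a 0 * (a 1)⁻¹ * (a 2) ^ (-2 : ℤ) * G + 1)⁻¹ = F := by
  have hcc : (a 2) ^ 2 ∈ Subring.center D := pow_mem (hac 2) 2
  have hcd : (a 2) ^ 2 * (a 2) ^ (-2 : ℤ) = 1 := by
    rw [zpow_neg, zpow_ofNat]
    exact mul_inv_cancel₀ (pow_ne_zero 2 (ha 2))
  generalize (a 2) ^ (-2 : ℤ) = d at *
  generalize (a 2) ^ 2 = c at *
  generalize a 0 * (a 1)⁻¹ = b at *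
  have hc : ∀ x, x * c = c * x := Subring.mem_center_iff.1 hcc
  have hdc : d * c = 1 := by rw [hc, hcd]
  -- `d` is the inverse of the central element `c`, hence central itself.
  have hd : ∀ x, x * d = d * x := fun x => by
    calc x * d = d * c * x * d := by rw [hdc, one_mul]
      _ = d * (x * (c * d)) := by rw [mul_assoc d, ← hc x]; simp only [mul_assoc]
      _ = d * x := by rw [hcd, mul_one]
  -- Up to a central factor, each numerator is the other factor's denominator.
  have h1 : b * G + c = c * (b * d * G + 1) := by
    rw [mul_add, mul_one, hd b, ← mul_assoc, ← mul_assoc, hcd, one_mul]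
  have h2 : b * G + d = d * (b * c * G + 1) := by
    rw [mul_add, mul_one, hc b, ← mul_assoc, ← mul_assoc, hdc, one_mul]
  rw [h1, h2]
  generalize b * d * G + 1 = y at *
  generalize b * c * G + 1 = x at *
  calc F * (c * y) * x⁻¹ * (d * x) * y⁻¹
      = F * (c * (y * (x⁻¹ * d) * x * y⁻¹)) := by simp only [mul_assoc]
    _ = F * (c * ((y * d) * (x⁻¹ * x) * y⁻¹)) := by rw [hd x⁻¹]; simp only [mul_assoc]
    _ = F * ((c * d) * (y * y⁻¹)) := by
      rw [inv_mul_cancel₀ hden1, mul_one, hd y]; simp only [mul_assoc]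
    _ = F := by rw [hcd, mul_inv_cancel₀ hden2, mul_one, mul_one]
end

section
/- Let σ_{01} be the linear map of V fixing e_2, e_3, e_4, e_5, δ and sending e_1 ↦ δ − e_1, and let σ_{45} be the linear map fixing e_1, e_2, e_3, e_4, δ and sending e_5 ↦ −e_5 (these are the lattice realizations of the Dynkin diagram automorphisms exchanging α_0 ↔ α_1, respectively α_4 ↔ α_5, and fixing the other simple roots and δ). Then the composite linear map T_3 := s_2 ∘ s_1 ∘ s_0 ∘ s_2 ∘ s_3 ∘ s_4 ∘ s_5 ∘ s_3 ∘ σ_{01} ∘ σ_{45} (rightmost map applied first) satisfies T_3(e_j) = e_j for j ∈ {1,2,4,5}, T_3(e_3) = e_3 − δ, and T_3(δ) = δ; that is, T_3 is the translation by the lattice element e_3. -/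
/-!
In the coordinates `(a, b, c, d, e, f)` of `a e_1 + b e_2 + c e_3 + d e_4 + e e_5 + f δ`, each simple
reflection permutes two of the first five coordinates, up to signs, and only `s_0` touches the
coefficient of `δ`. Composing these signed permutations with `σ_{01}` and `σ_{45}`, all of the
permutations and signs cancel, and what remains is `f ↦ f - c`, i.e. `v ↦ v - B(v, e_3) δ`
(`T3_apply`). The theorem evaluates this formula on the basis.
-/

/-- `V = ℝ⁶` with coordinates `(x_1, …, x_5, x_δ)` w.r.t. the basis `e_1, …, e_5, δ`;
`B` is the bilinear form with `B(e_i, e_j) = δ_{ij}`, `B(e_i, δ) = B(δ, δ) = 0`. -/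
def Bform (x y : Fin 6 → ℝ) : ℝ :=
  x 0 * y 0 + x 1 * y 1 + x 2 * y 2 + x 3 * y 3 + x 4 * y 4

/-- The simple roots of `D_5^{(1)}`: `α_0 = δ−e_1−e_2`, `α_1 = e_1−e_2`, `α_2 = e_2−e_3`,
`α_3 = e_3−e_4`, `α_4 = e_4−e_5`, `α_5 = e_4+e_5`. -/
def alphaD5 : Fin 6 → (Fin 6 → ℝ) :=
  ![![-1, -1, 0, 0, 0, 1],
    ![1, -1, 0, 0, 0, 0],
    ![0, 1, -1, 0, 0, 0],
    ![0, 0, 1, -1, 0, 0],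
    ![0, 0, 0, 1, -1, 0],
    ![0, 0, 0, 1, 1, 0]]

/-- The simple reflection `s_i(v) = v − B(v, α_i) α_i`. -/
def sRefV (i : Fin 6) (v : Fin 6 → ℝ) : Fin 6 → ℝ :=
  v - Bform v (alphaD5 i) • alphaD5 i

/-- The diagram automorphism `σ_{01}`: fixes `e_2, e_3, e_4, e_5, δ`, sends `e_1 ↦ δ − e_1`. -/
def sigma01V (v : Fin 6 → ℝ) : Fin 6 → ℝ :=
  ![-(v 0), v 1, v 2, v 3, v 4, v 5 + v 0]

/-- The diagram automorphism `σ_{45}`: fixes `e_1, e_2, e_3, e_4, δ`, sends `e_5 ↦ −e_5`. -/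
def sigma45V (v : Fin 6 → ℝ) : Fin 6 → ℝ :=
  ![v 0, v 1, v 2, v 3, -(v 4), v 5]

/-- The basis vectors `e_1, …, e_5` of `V` (as the first five coordinate vectors). -/
def eV (k : Fin 5) : Fin 6 → ℝ := fun i => if i.val = k.val then 1 else 0

/-- The null root `δ` (the last coordinate vector). -/
def deltaV : Fin 6 → ℝ := ![0, 0, 0, 0, 0, 1]

lemma sRefV_zero_apply (a b c d e f : ℝ) :
    sRefV 0 ![a, b, c, d, e, f] = ![-b, -a, c, d, e, f + a + b] := by
  ext i
  fin_cases i <;> simp [sRefV, Bform, alphaD5] <;> ring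

lemma sRefV_one_apply (a b c d e f : ℝ) :
    sRefV 1 ![a, b, c, d, e, f] = ![b, a, c, d, e, f] := by
  ext i
  fin_cases i <;> simp [sRefV, Bform, alphaD5]

lemma sRefV_two_apply (a b c d e f : ℝ) :
    sRefV 2 ![a, b, c, d, e, f] = ![a, c, b, d, e, f] := by
  ext i
  fin_cases i <;> simp [sRefV, Bform, alphaD5]

lemma sRefV_three_apply (a b c d e f : ℝ) :
    sRefV 3 ![a, b, c, d, e, f] = ![a, b, d, c, e, f] := by
  ext i
  fin_cases i <;> simp [sRefV, Bform, alphaD5]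

lemma sRefV_four_apply (a b c d e f : ℝ) :
    sRefV 4 ![a, b, c, d, e, f] = ![a, b, c, e, d, f] := by
  ext i
  fin_cases i <;> simp [sRefV, Bform, alphaD5]

lemma sRefV_five_apply (a b c d e f : ℝ) :
    sRefV 5 ![a, b, c, d, e, f] = ![a, b, c, -e, -d, f] := by
  ext i
  fin_cases i <;> simp [sRefV, Bform, alphaD5]

/-- The composite `T_3` is `v ↦ v - B(v, e_3) δ` in coordinates. -/
lemma T3_apply (v : Fin 6 → ℝ) :
    (sRefV 2 ∘ sRefV 1 ∘ sRefV 0 ∘ sRefV 2 ∘ sRefV 3 ∘ sRefV 4 ∘ sRefV 5 ∘ sRefV 3 ∘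
      sigma01V ∘ sigma45V) v = ![v 0, v 1, v 2, v 3, v 4, v 5 - v 2] := by
  have h : sigma01V (sigma45V v) = ![-(v 0), v 1, v 2, v 3, -(v 4), v 5 + v 0] := rfl
  simp only [Function.comp_apply, h, sRefV_zero_apply, sRefV_one_apply, sRefV_two_apply,
    sRefV_three_apply, sRefV_four_apply, sRefV_five_apply, neg_neg]
  congr! 6
  ring_nf

/-- the composite `T_3 = s_2 s_1 s_0 s_2 s_3 s_4 s_5 s_3 σ_{01} σ_{45}`
(rightmost applied first) is the translation by `e_3`: it fixes `e_1, e_2, e_4, e_5, δ`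
and sends `e_3 ↦ e_3 − δ`. -/
theorem T3_is_translation_by_e3 :
    let T3 : (Fin 6 → ℝ) → (Fin 6 → ℝ) :=
      sRefV 2 ∘ sRefV 1 ∘ sRefV 0 ∘ sRefV 2 ∘ sRefV 3 ∘ sRefV 4 ∘ sRefV 5 ∘ sRefV 3 ∘
        sigma01V ∘ sigma45V
    T3 (eV 0) = eV 0 ∧ T3 (eV 1) = eV 1 ∧ T3 (eV 3) = eV 3 ∧ T3 (eV 4) = eV 4 ∧
      T3 (eV 2) = eV 2 - deltaV ∧ T3 deltaV = deltaV := by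
  intro T3
  have h : ∀ v, T3 v = ![v 0, v 1, v 2, v 3, v 4, v 5 - v 2] := T3_apply
  simp only [h]
  refine ⟨?_, ?_, ?_, ?_, ?_, ?_⟩ <;> ext i <;> fin_cases i <;> simp [eV, deltaV]
end

section
/- Let K = ℂ(a_0,…,a_5) be the field of rational functions in six variables, let s_i (i=0,…,5) be the ℂ-algebra automorphism of K determined by s_i(a_j) = a_i^{−C_{ij}} a_j, and let σ' be the ℂ-algebra automorphism determined by σ'(a_0)=a_1, σ'(a_1)=a_0, σ'(a_4)=a_5, σ'(a_5)=a_4, σ'(a_2)=a_2, σ'(a_3)=a_3. Set T_3 := s_2 ∘ s_1 ∘ s_0 ∘ s_2 ∘ s_3 ∘ s_4 ∘ s_5 ∘ s_3 ∘ σ', where automorphisms are composed by (u ∘ v)(x) = u(v(x)). Then T_3(a_0)=a_0, T_3(a_1)=a_1, T_3(a_4)=a_4, T_3(a_5)=a_5, T_3(a_2) = p·a_2 and T_3(a_3) = p^{−1}·a_3, where p := a_0 a_1 a_2² a_3² a_4 a_5; in particular T_3(p) = p. -/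
/-!
Every map in sight sends Laurent monomials in `a_0, …, a_5` to Laurent monomials, so `T_3` is
determined by its action on exponent vectors `e : Fin 6 → ℤ`. There `s_i` is the simple reflection
`e ↦ e - (∑ j, C_{ij} e_j) ε_i` of the affine root lattice (`map_laurent`), and the
claim becomes a computation with integer vectors. The vector of `p` is the null root
`δ = (1, 1, 2, 2, 1, 1)`, and `T_3` is the translation `ε_2 ↦ ε_2 + δ`, `ε_3 ↦ ε_3 - δ`.
-/

/-- The Cartan matrix of the affine root system `D_5^{(1)}`, with Dynkin diagram edges
`{0,2},{1,2},{2,3},{3,4},{3,5}`. -/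
def CD5 (i j : Fin 6) : ℤ :=
  if i = j then 2
  else if (i, j) ∈ [((0 : Fin 6), (2 : Fin 6)), (1, 2), (2, 3), (3, 4), (3, 5)] ∨
          (j, i) ∈ [((0 : Fin 6), (2 : Fin 6)), (1, 2), (2, 3), (3, 4), (3, 5)] then -1
  else 0

/-- The field `K = ℂ(a_0, …, a_5)` of rational functions in six variables. -/
abbrev Krat : Type := FractionRing (MvPolynomial (Fin 6) ℂ)

/-- The generator `a_j` of `K = ℂ(a_0, …, a_5)`. -/
noncomputable def av (j : Fin 6) : Krat :=
  algebraMap (MvPolynomial (Fin 6) ℂ) Krat (MvPolynomial.X j)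

theorem av_ne_zero (j : Fin 6) : av j ≠ 0 := by
  unfold av
  simp

/-- The Laurent monomial `a^e = a_0^{e_0} ⋯ a_5^{e_5}` with exponent vector `e`. -/
noncomputable def laurent (e : Fin 6 → ℤ) : Krat := ∏ j, av j ^ e j

/-- The simple reflection `e ↦ e - (∑ j, C_{ij} e_j) ε_i` on exponent vectors. -/
def reflect (i : Fin 6) (e : Fin 6 → ℤ) : Fin 6 → ℤ :=
  fun k => if k = i then e k - ∑ j, CD5 i j * e j else e k

theorem map_laurent (i : Fin 6) (f : Krat ≃ₐ[ℂ] Krat)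
    (hf : ∀ j : Fin 6, f (av j) = av i ^ (-(CD5 i j)) * av j) (e : Fin 6 → ℤ) :
    f (laurent e) = laurent (reflect i e) := by
  have h1 : f (laurent e) = av i ^ (-∑ j, CD5 i j * e j) * laurent e := by
    have h2 : av i ^ (-∑ j, CD5 i j * e j) = ∏ j, av i ^ (-(CD5 i j) * e j) := by
      simp only [Fin.sum_univ_six, Fin.prod_univ_six, ← zpow_add₀ (av_ne_zero i)]
      congr 1
      ring
    simp only [h2, laurent, map_prod, map_zpow₀, hf, mul_zpow, ← zpow_mul,
      Finset.prod_mul_distrib]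
  rw [h1, laurent, laurent, ← Finset.mul_prod_erase _ _ (Finset.mem_univ i),
    ← Finset.mul_prod_erase _ _ (Finset.mem_univ i), ← mul_assoc, ← zpow_add₀ (av_ne_zero i)]
  congr 1
  · congr 1
    simp only [reflect, if_true]
    ring
  · refine Finset.prod_congr rfl fun k hk => ?_
    simp [reflect, Finset.ne_of_mem_erase hk]

/-- if `s_i` are the ℂ-algebra automorphisms of `K = ℂ(a_0,…,a_5)` with
`s_i(a_j) = a_i^(−C_{ij}) a_j` and `σ'` swaps `a_0 ↔ a_1`, `a_4 ↔ a_5` fixing `a_2, a_3`,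
then `T_3 = s_2 ∘ s_1 ∘ s_0 ∘ s_2 ∘ s_3 ∘ s_4 ∘ s_5 ∘ s_3 ∘ σ'` fixes `a_0, a_1, a_4, a_5`
and sends `a_2 ↦ p a_2`, `a_3 ↦ p⁻¹ a_3`, where `p = a_0 a_1 a_2² a_3² a_4 a_5`;
in particular `T_3(p) = p`. -/
theorem T3_parameter_action
    (s : Fin 6 → (Krat ≃ₐ[ℂ] Krat)) (σ' : Krat ≃ₐ[ℂ] Krat)
    (hs : ∀ i j : Fin 6, s i (av j) = av i ^ (-(CD5 i j)) * av j)
    (hσ0 : σ' (av 0) = av 1) (hσ1 : σ' (av 1) = av 0)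
    (hσ2 : σ' (av 2) = av 2) (hσ3 : σ' (av 3) = av 3)
    (hσ4 : σ' (av 4) = av 5) (hσ5 : σ' (av 5) = av 4) :
    let T3 : Krat → Krat := fun x => s 2 (s 1 (s 0 (s 2 (s 3 (s 4 (s 5 (s 3 (σ' x))))))))
    let p : Krat := av 0 * av 1 * (av 2) ^ 2 * (av 3) ^ 2 * av 4 * av 5
    T3 (av 0) = av 0 ∧ T3 (av 1) = av 1 ∧ T3 (av 4) = av 4 ∧ T3 (av 5) = av 5 ∧
      T3 (av 2) = p * av 2 ∧ T3 (av 3) = p⁻¹ * av 3 ∧ T3 p = p := by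
  intro T3 p
  have a0 : av 0 = laurent ![1, 0, 0, 0, 0, 0] := by simp [laurent, Fin.prod_univ_six]
  have a1 : av 1 = laurent ![0, 1, 0, 0, 0, 0] := by simp [laurent, Fin.prod_univ_six]
  have a2 : av 2 = laurent ![0, 0, 1, 0, 0, 0] := by simp [laurent, Fin.prod_univ_six]
  have a3 : av 3 = laurent ![0, 0, 0, 1, 0, 0] := by simp [laurent, Fin.prod_univ_six]
  have a4 : av 4 = laurent ![0, 0, 0, 0, 1, 0] := by simp [laurent, Fin.prod_univ_six]
  have a5 : av 5 = laurent ![0, 0, 0, 0, 0, 1] := by simp [laurent, Fin.prod_univ_six]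
  have hp : p ≠ 0 := by simp [p, av_ne_zero]
  have hpl : p = laurent ![1, 1, 2, 2, 1, 1] := by
    simp [p, laurent, Fin.prod_univ_six, zpow_ofNat]
  have hadd (e e' : Fin 6 → ℤ) : laurent e * laurent e' = laurent (e + e') := by
    simp only [laurent, ← Finset.prod_mul_distrib, Pi.add_apply]
    exact Finset.prod_congr rfl fun k _ => (zpow_add₀ (av_ne_zero k) _ _).symm
  have hneg (e : Fin 6 → ℤ) : (laurent e)⁻¹ = laurent (-e) := by
    simp only [laurent, ← Finset.prod_inv_distrib, Pi.neg_apply, zpow_neg]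
  have hm (i : Fin 6) (e : Fin 6 → ℤ) : s i (laurent e) = laurent (reflect i e) :=
    map_laurent i (s i) (hs i) e
  have t0 : T3 (av 0) = av 0 := by
    simp only [T3, hσ0]
    simp only [a0, a1, hm]
    refine congrArg laurent ?_
    decide
  have t1 : T3 (av 1) = av 1 := by
    simp only [T3, hσ1]
    simp only [a0, a1, hm]
    refine congrArg laurent ?_
    decide
  have t4 : T3 (av 4) = av 4 := by
    simp only [T3, hσ4]
    simp only [a4, a5, hm]
    refine congrArg laurent ?_
    decide
  have t5 : T3 (av 5) = av 5 := by
    simp only [T3, hσ5]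
    simp only [a4, a5, hm]
    refine congrArg laurent ?_
    decide
  have t2 : T3 (av 2) = p * av 2 := by
    simp only [T3, hσ2]
    simp only [hpl, a2, hm, hadd]
    refine congrArg laurent ?_
    decide
  have t3 : T3 (av 3) = p⁻¹ * av 3 := by
    simp only [T3, hσ3]
    simp only [hpl, a3, hm, hadd, hneg]
    refine congrArg laurent ?_
    decide
  refine ⟨t0, t1, t4, t5, t2, t3, ?_⟩
  have hT : T3 p = T3 (av 0) * T3 (av 1) * T3 (av 2) ^ 2 * T3 (av 3) ^ 2 * T3 (av 4) *
      T3 (av 5) := by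
    simp only [T3, p, map_mul, map_pow]
  rw [hT, t0, t1, t2, t3, t4, t5]
  -- The factors `p ^ 2` from `a_2 ^ 2` and `p⁻¹ ^ 2` from `a_3 ^ 2` cancel.
  calc av 0 * av 1 * (p * av 2) ^ 2 * (p⁻¹ * av 3) ^ 2 * av 4 * av 5
      = (p * p⁻¹) ^ 2 * (av 0 * av 1 * av 2 ^ 2 * av 3 ^ 2 * av 4 * av 5) := by ring
    _ = p := by rw [mul_inv_cancel₀ hp, one_pow, one_mul]
end

section
/- Starting from the triple ((a_0,…,a_5), F, G), apply successively the maps Φ_2, Φ_1, Φ_0, Φ_2, Φ_3, Φ_4, Φ_5, Φ_3, Φ_σ (with Φ_2 applied first), and write ((a'_0,…,a'_5), F', G') for the resulting triple; this composite realizes the action of the translation T_3 = s_2 s_1 s_0 s_2 s_3 s_4 s_5 s_3 σ_{01}σ_{45} on (F,G). Then, with t := a_3² a_4 a_5 and p := a_0 a_1 a_2² a_3² a_4 a_5 formed from the initial parameters, the first quantized discrete Painlevé VI equation holds: F' = (p²/(q² t²)) · (G + p^{−1} a_1^{−2} t) · (G + p a_0^{−2} t^{−1})^{−1} · (G + p^{−1}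 a_1^{2} t) · (G + p a_0^{2} t^{−1})^{−1} · F^{−1}. -/
/-- The generator map `Φ_i` on triples `((a_0,…,a_5), F, G)`: the parameters transform by
`a_j ↦ a_i^(−C_{ij}) a_j`; `F` changes only for `i = 2`, and `G` only for `i = 3`. -/
def PhiGen {D : Type*} [DivisionRing D] (i : Fin 6) :
    ((Fin 6 → D) × D × D) → (Fin 6 → D) × D × D :=
  fun x =>
    ⟨fun j => x.1 i ^ (-(CD5 i j)) * x.1 j,
     if i = 2 then
       x.2.1 * (x.1 0 * (x.1 1)⁻¹ * x.2.2 + (x.1 2) ^ 2) *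
         (x.1 0 * (x.1 1)⁻¹ * (x.1 2) ^ 2 * x.2.2 + 1)⁻¹
     else x.2.1,
     if i = 3 then
       ((x.1 3) ^ 2 * x.1 4 * (x.1 5)⁻¹ * x.2.1 + 1) *
         (x.1 4 * (x.1 5)⁻¹ * x.2.1 + (x.1 3) ^ 2)⁻¹ * x.2.2
     else x.2.2⟩

/-- The diagram automorphism map `Φ_σ` (for `σ_{01}σ_{45}`): swaps `a_0 ↔ a_1`, `a_4 ↔ a_5`,
fixes `a_2, a_3`, and sends `F ↦ q⁻²F⁻¹`, `G ↦ q⁻²G⁻¹`. -/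
def PhiSigma {D : Type*} [DivisionRing D] (q : D) :
    ((Fin 6 → D) × D × D) → (Fin 6 → D) × D × D :=
  fun x => ⟨fun j => x.1 (![1, 0, 2, 3, 5, 4] j),
    q ^ (-2 : ℤ) * x.2.1⁻¹, q ^ (-2 : ℤ) * x.2.2⁻¹⟩

/-- Inversion of a product of `F` and four further factors, with the central scalars pulled to
the front and the mutually commuting `X`, `Y`, `Z` reordered. -/
lemma inv_four_factors {D K : Type*} [DivisionRing D] [Field K] (φ : K →+* D)
    (hφ : ∀ k x, Commute (φ k) x) (k₁ k₂ k₃ k₄ : K) {F X Y Z W : D}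
    (hXY : Commute X Y) (hXZ : Commute X Z) (hYZ : Commute Y Z) :
    (F * (φ k₁ * X) * (φ k₂ * Y)⁻¹ * (φ k₃ * Z) * (φ k₄ * W)⁻¹)⁻¹ =
      φ (k₁⁻¹ * k₂ * k₃⁻¹ * k₄) * W * X⁻¹ * Y * Z⁻¹ * F⁻¹ := by
  have hr : Z⁻¹ * (Y * X⁻¹) = X⁻¹ * (Y * Z⁻¹) := by
    rw [← mul_assoc, (hYZ.symm.inv_left₀).eq, mul_assoc,
      ((hXZ.inv_left₀.inv_right₀).symm).eq, ← mul_assoc, (hXY.symm.inv_right₀).eq, mul_assoc]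
  have hr' (y : D) : Z⁻¹ * (Y * (X⁻¹ * y)) = X⁻¹ * (Y * (Z⁻¹ * y)) := by
    simpa only [mul_assoc] using congrArg (· * y) hr
  have hi (k : K) (x : D) : (φ k * x)⁻¹ = φ k⁻¹ * x⁻¹ := by
    rw [mul_inv_rev, ← map_inv₀, (hφ _ _).eq]
  -- Under right-associated products `hi` applies to each tail, so scalars move to the front.
  simp only [mul_inv_rev, inv_inv, map_mul, hi, mul_assoc, hr']

/-- applying `Φ_2, Φ_1, Φ_0, Φ_2, Φ_3, Φ_4, Φ_5, Φ_3, Φ_σ` (leftmost first)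
to `((a_0,…,a_5),F,G)` realizes the translation `T_3`, and the resulting `F'` satisfies the
first quantized discrete Painlevé VI equation. -/
theorem quantum_qPVI_first_equation {D : Type*} [DivisionRing D]
    (q : D) (a : Fin 6 → D) (F G : D)
    (hq : q ≠ 0) (hqc : q ∈ Subring.center D)
    (ha : ∀ i, a i ≠ 0) (hac : ∀ i, a i ∈ Subring.center D)
    (hF : F ≠ 0) (hG : G ≠ 0)
    (hFG : F * G = q ^ 2 * G * F)
    (hgen : ∀ α β : D, α ∈ Subfield.closure (insert q (Set.range a)) →
      β ∈ Subfield.closure (insert q (Set.range a)) → ¬(α = 0 ∧ β = 0) →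
      α * F + β ≠ 0 ∧ α * G + β ≠ 0) :
    let t : D := (a 3) ^ 2 * a 4 * a 5
    let p : D := a 0 * a 1 * (a 2) ^ 2 * (a 3) ^ 2 * a 4 * a 5
    (PhiSigma q (PhiGen 3 (PhiGen 5 (PhiGen 4 (PhiGen 3 (PhiGen 2 (PhiGen 0 (PhiGen 1
        (PhiGen 2 (a, F, G)))))))))).2.1 =
      p ^ 2 * (q ^ 2 * t ^ 2)⁻¹ *
        (G + p⁻¹ * (a 1) ^ (-2 : ℤ) * t) * (G + p * (a 0) ^ (-2 : ℤ) * t⁻¹)⁻¹ *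
        (G + p⁻¹ * (a 1) ^ 2 * t) * (G + p * (a 0) ^ 2 * t⁻¹)⁻¹ * F⁻¹ := by
  intro t p
  -- Lift all parameters to the center, where coefficient identities are field identities.
  obtain ⟨φ, hφ, hrange⟩ : ∃ φ : Subring.center D →+* D, (∀ k x, Commute (φ k) x) ∧
      ∀ x ∈ Subring.center D, ∃ k, φ k = x :=
    ⟨(Subring.center D).subtype, fun k x => (Subring.mem_center_iff.1 k.2 x).symm,
      fun x hx => ⟨⟨x, hx⟩, rfl⟩⟩
  obtain ⟨r, rfl⟩ := hrange q hqc
  choose b hb using fun i => hrange (a i) (hac i)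
  obtain rfl : (fun i => φ (b i)) = a := funext hb
  have hr : r ≠ 0 := fun h => hq (by rw [h, map_zero])
  have hbn (i) : b i ≠ 0 := fun h => ha i (by simp only [h, map_zero])
  have h0 := hbn 0
  have h1 := hbn 1
  have h2 := hbn 2
  have h3 := hbn 3
  have h4 := hbn 4
  have h5 := hbn 5
  have hc (k l : Subring.center D) : Commute (G + φ k) (G + φ l) :=
    ((Commute.refl G).add_right (hφ l G).symm).add_left (hφ k _)
  have hlin (k l : Subring.center D) (hk : k ≠ 0) :
      φ k * G + φ l = φ k * (G + φ (k⁻¹ * l)) := by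
    rw [mul_add, ← map_mul, mul_inv_cancel_left₀ hk]
  have key := inv_four_factors φ hφ (b 0 * (b 1)⁻¹) (b 0 * (b 1)⁻¹ * b 2 ^ 2)
    (b 1 * (b 0)⁻¹) (b 0 * b 1 ^ 3 * b 2 ^ 2) (F := F)
    (W := G + φ ((b 0 * b 1 ^ 3 * b 2 ^ 2)⁻¹ * 1))
    (hc ((b 0 * (b 1)⁻¹)⁻¹ * b 2 ^ 2) ((b 0 * (b 1)⁻¹ * b 2 ^ 2)⁻¹ * 1))
    (hc _ ((b 1 * (b 0)⁻¹)⁻¹ * (b 0 * b 1 * b 2) ^ 2)) (hc _ _)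
  rw [← hlin _ _ (by simp [*]), ← hlin _ _ (by simp [*]), ← hlin _ _ (by simp [*]),
    ← hlin _ _ (by simp [*])] at key
  have hL : (PhiSigma (φ r) (PhiGen 3 (PhiGen 5 (PhiGen 4 (PhiGen 3 (PhiGen 2 (PhiGen 0 (PhiGen 1
        (PhiGen 2 (fun i => φ (b i), F, G)))))))))).2.1 = φ (r ^ (-2 : ℤ)) *
      (F * (φ (b 0 * (b 1)⁻¹) * G + φ (b 2 ^ 2)) *
        (φ (b 0 * (b 1)⁻¹ * b 2 ^ 2) * G + φ 1)⁻¹ *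
        (φ (b 1 * (b 0)⁻¹) * G + φ ((b 0 * b 1 * b 2) ^ 2)) *
        (φ (b 0 * b 1 ^ 3 * b 2 ^ 2) * G + φ 1)⁻¹)⁻¹ := by
    have e₁ : ((b 2 * b 0) ^ 2)⁻¹ * (b 2 * b 0) * (((b 2 * b 1) ^ 2)⁻¹ * (b 2 * b 1))⁻¹ =
        b 1 * (b 0)⁻¹ := by field_simp
    have e₂ : b 2 * b 0 * (b 2 * b 1 * ((b 2 ^ 2)⁻¹ * b 2)) = b 0 * b 1 * b 2 := by field_simp
    have e₃ : b 1 * (b 0)⁻¹ * (b 0 * b 1 * b 2) ^ 2 = b 0 * b 1 ^ 3 * b 2 ^ 2 := by field_simp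
    simp [PhiSigma, PhiGen, CD5, -mul_inv_rev, ← map_mul, ← map_inv₀, ← map_pow, e₁, e₂, e₃]
  have hcongr {c c' d₁ d₁' d₂ d₂' d₃ d₃' d₄ d₄' : Subring.center D} (h : c = c') (h₁ : d₁ = d₁')
      (h₂ : d₂ = d₂') (h₃ : d₃ = d₃') (h₄ : d₄ = d₄') :
      φ c * (G + φ d₁) * (G + φ d₂)⁻¹ * (G + φ d₃) * (G + φ d₄)⁻¹ * F⁻¹ =
        φ c' * (G + φ d₁') * (G + φ d₂')⁻¹ * (G + φ d₃') * (G + φ d₄')⁻¹ * F⁻¹ := by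
    rw [h, h₁, h₂, h₃, h₄]
  rw [hL, key]
  simp only [t, p, ← map_mul, ← map_inv₀, ← map_pow, ← map_zpow₀, ← mul_assoc]
  exact hcongr (by field_simp) (by field_simp) (by field_simp) (by field_simp) (by field_simp)
end
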